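/- Let m ∈ ℕ and let w be a (1/(m+1))-concise group-word in n variables. Then there exists a function f : ℕ → ℕ such that for every r ≥ 1 and every group G in which w takes precisely r values, the iterated commutator subgroup [w(G), G, ..., G] (with G repeated m times) has order at most f(r). -/

import Mathlib

/-- The set of `w`-values in `G`: images of the word `w` (an element of the free
group on `n` generators) under all homomorphisms `FreeGroup (Fin n) →* G`. -/
def wValues {n : ℕ} (w : FreeGroup (Fin n)) (G : Type*) [Group G] : Set G :=
  Set.range fun g : Fin n → G => FreeGroup.lift g w

/-- `G_w^* = G_w ∪ G_w⁻¹`. -/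
def wValuesStar {n : ℕ} (w : FreeGroup (Fin n)) (G : Type*) [Group G] : Set G :=
  wValues w G ∪ (wValues w G)⁻¹

/-- The verbal subgroup `w(G)` generated by all `w`-values. -/
def verbalSubgroup {n : ℕ} (w : FreeGroup (Fin n)) (G : Type*) [Group G] : Subgroup G :=
  Subgroup.closure (wValues w G)

/-- The iterated commutator subgroup `[H, G, ..., G]` with `G` repeated `k` times. -/
def iterCommSub (G : Type*) [Group G] (H : Subgroup G) : ℕ → Subgroup G
  | 0 => H
  | k + 1 => ⁅iterCommSub G H k, (⊤ : Subgroup G)⁆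

/-- The set of conjugates `x^S = {g⁻¹ x g : g ∈ S}`. -/
def conjSet {G : Type*} [Group G] (x : G) (S : Set G) : Set G :=
  (fun g => g⁻¹ * x * g) '' S

/-- `G` is an `FC(w)`-group: every conjugacy set `x^{G_w}` is finite. -/
def IsFCw {n : ℕ} (w : FreeGroup (Fin n)) (G : Type*) [Group G] : Prop :=
  ∀ x : G, (conjSet x (wValues w G)).Finite

/-- `G` is a `BFC(w)`-group: the sets `x^{G_w}` are finite of bounded size. -/
def IsBFCw {n : ℕ} (w : FreeGroup (Fin n)) (G : Type*) [Group G] : Prop :=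
  ∃ c : ℕ, ∀ x : G,
    (conjSet x (wValues w G)).Finite ∧ (conjSet x (wValues w G)).ncard ≤ c

/-- A subgroup `H` is `FC`-embedded in `G` if `x^H` is finite for every `x ∈ G`. -/
def IsFCEmbedded {G : Type*} [Group G] (H : Subgroup G) : Prop :=
  ∀ x : G, (conjSet x (H : Set G)).Finite

/-- A subgroup `H` is `BFC`-embedded in `G` if the sets `x^H` are finite of bounded size. -/
def IsBFCEmbedded {G : Type*} [Group G] (H : Subgroup G) : Prop :=
  ∃ d : ℕ, ∀ x : G,
    (conjSet x (H : Set G)).Finite ∧ (conjSet x (H : Set G)).ncard ≤ d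

/-- A word `w` is `(1/k)`-concise (`k ≥ 1`): in every group `G` with `G_w` finite,
the subgroup `[w(G), G, ..., G]` (with `G` repeated `k - 1` times) is finite. -/
def IsFracConcise {n : ℕ} (w : FreeGroup (Fin n)) (k : ℕ) : Prop :=
  ∀ (G : Type*) [Group G], (wValues w G).Finite →
    ((iterCommSub G (verbalSubgroup w G) (k - 1) : Subgroup G) : Set G).Finite

/-- A word `w` is `0`-concise: in every group `G` with `G_w` finite, some iterated
commutator subgroup `[w(G), G, ..., G]` is finite. -/
def IsZeroConcise {n : ℕ} (w : FreeGroup (Fin n)) : Prop :=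
  ∀ (G : Type*) [Group G], (wValues w G).Finite →
    ∃ k : ℕ, ((iterCommSub G (verbalSubgroup w G) k : Subgroup G) : Set G).Finite

/-- The commutator `[a, b] = a⁻¹ b⁻¹ a b`. -/
def pcomm {G : Type*} [Group G] (a b : G) : G := a⁻¹ * b⁻¹ * a * b

/-- The word `w(x_1, ..., x_n)` viewed in the free group on `n + m` generators. -/
def extendWord {n : ℕ} (m : ℕ) (w : FreeGroup (Fin n)) : FreeGroup (Fin (n + m)) :=
  FreeGroup.map (Fin.castAdd m) w

/-- The word `v = [w(x_1, ..., x_n), x_{n+1}, ..., x_{n+m}]`. -/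
def commWord {n : ℕ} (m : ℕ) (w : FreeGroup (Fin n)) : FreeGroup (Fin (n + m)) :=
  (List.ofFn fun i : Fin m => FreeGroup.of (Fin.natAdd n i)).foldl pcomm (extendWord m w)

/-- The iterated commutator `[y, b, ..., b]` with `b` repeated `k` times. -/
def iterPcomm {G : Type*} [Group G] (y b : G) : ℕ → G
  | 0 => y
  | k + 1 => pcomm (iterPcomm y b k) b

section helpers
open scoped commutatorElement
universe uu vv

/-- The set of iterated commutators generating `iterCommSub`. -/
def genSet {n : ℕ} (w : FreeGroup (Fin n)) (G : Type*) [Group G] : ℕ → Set G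
  | 0 => wValues w G
  | k + 1 => {x | ∃ s ∈ genSet w G k, ∃ g : G, x = ⁅s, g⁆}

theorem lift_comp_hom {n : ℕ} (w : FreeGroup (Fin n)) {H G : Type*} [Group H] [Group G]
    (f : H →* G) (g : Fin n → H) :
    f (FreeGroup.lift g w) = FreeGroup.lift (fun i => f (g i)) w := by
  have : f.comp (FreeGroup.lift g) = FreeGroup.lift (fun i => f (g i)) := by
    ext i; simp
  rw [← this]; rfl

theorem map_verbal_le {n : ℕ} (w : FreeGroup (Fin n)) {H G : Type*} [Group H] [Group G]
    (f : H →* G) (m : ℕ) :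
    (iterCommSub H (verbalSubgroup w H) m).map f ≤ iterCommSub G (verbalSubgroup w G) m := by
  induction m with
  | zero =>
    simp only [iterCommSub, verbalSubgroup]
    rw [MonoidHom.map_closure]
    apply Subgroup.closure_mono
    rintro _ ⟨_, ⟨g, rfl⟩, rfl⟩
    exact ⟨fun i => f (g i), (lift_comp_hom w f g).symm⟩
  | succ k ih =>
    simp only [iterCommSub]
    rw [Subgroup.map_commutator]
    exact Subgroup.commutator_mono ih le_top

theorem genSet_conj {n : ℕ} (w : FreeGroup (Fin n)) (G : Type*) [Group G] (m : ℕ) :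
    ∀ x ∈ genSet w G m, ∀ g : G, g * x * g⁻¹ ∈ genSet w G m := by
  induction m with
  | zero =>
    rintro _ ⟨h, rfl⟩ g
    refine ⟨fun i => g * h i * g⁻¹, ?_⟩
    have := lift_comp_hom w (MulAut.conj g).toMonoidHom h
    simpa using this.symm
  | succ k ih =>
    rintro _ ⟨s, hs, a, rfl⟩ g
    refine ⟨g * s * g⁻¹, ih s hs g, g * a * g⁻¹, ?_⟩
    simp only [commutatorElement_def]; group

theorem closure_normal_of_conj {G : Type*} [Group G] (S : Set G)
    (hS : ∀ x ∈ S, ∀ g : G, g * x * g⁻¹ ∈ S) : (Subgroup.closure S).Normal := by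
  constructor
  intro x hx g
  induction hx using Subgroup.closure_induction with
  | mem x hx => exact Subgroup.subset_closure (hS x hx g)
  | one => simp
  | mul a b _ _ ha hb =>
    have := mul_mem ha hb
    convert this using 1; group
  | inv a _ ha =>
    have := inv_mem ha
    convert this using 1; group

theorem iterCommSub_le_closure {n : ℕ} (w : FreeGroup (Fin n)) (G : Type*) [Group G] (m : ℕ) :
    iterCommSub G (verbalSubgroup w G) m ≤ Subgroup.closure (genSet w G m) := by
  induction m with
  | zero => exact le_rfl
  | succ k ih =>
    have hN := closure_normal_of_conj _ (genSet_conj w G (k + 1))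
    simp only [iterCommSub]
    rw [Subgroup.commutator_le]
    intro a ha g _
    replace ha := ih ha
    induction ha using Subgroup.closure_induction with
    | mem x hx => exact Subgroup.subset_closure ⟨x, hx, g, rfl⟩
    | one => simp
    | mul a b _ _ ha hb =>
      have := mul_mem (hN.conj_mem _ hb a) ha
      convert this using 1
      simp only [commutatorElement_def]; group
    | inv a _ ha =>
      have := hN.conj_mem _ (inv_mem ha) a⁻¹
      convert this using 1
      simp only [commutatorElement_def]; group

theorem mono_sub {n : ℕ} (w : FreeGroup (Fin n)) {G : Type*} [Group G] (m : ℕ)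
    {K L : Subgroup G} (h : K ≤ L) :
    (iterCommSub K (verbalSubgroup w K) m).map K.subtype ≤
      (iterCommSub L (verbalSubgroup w L) m).map L.subtype := by
  have := Subgroup.map_mono (f := L.subtype) (map_verbal_le w (Subgroup.inclusion h) m)
  rwa [Subgroup.map_map, Subgroup.subtype_comp_inclusion] at this

theorem local_mem {n : ℕ} (w : FreeGroup (Fin n)) {G : Type*} [Group G] (m : ℕ) :
    ∀ x ∈ iterCommSub G (verbalSubgroup w G) m,
      ∃ K : Subgroup G, K.FG ∧ x ∈ (iterCommSub K (verbalSubgroup w K) m).map K.subtype := by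
  have key : ∀ (m : ℕ) (S : Set G), (∀ x ∈ S, ∃ K : Subgroup G, K.FG ∧
      x ∈ (iterCommSub K (verbalSubgroup w K) m).map K.subtype) →
      ∀ x ∈ Subgroup.closure S, ∃ K : Subgroup G, K.FG ∧
      x ∈ (iterCommSub K (verbalSubgroup w K) m).map K.subtype := by
    intro m S hS x hx
    induction hx using Subgroup.closure_induction with
    | mem x hx => exact hS x hx
    | one => exact ⟨⊥, Subgroup.FG.bot, one_mem _⟩
    | mul a b _ _ ha hb =>
      obtain ⟨K, hK, ha⟩ := ha
      obtain ⟨L, hL, hb⟩ := hb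
      exact ⟨K ⊔ L, hK.sup hL, mul_mem (mono_sub w m le_sup_left ha)
        (mono_sub w m le_sup_right hb)⟩
    | inv a _ ha =>
      obtain ⟨K, hK, ha⟩ := ha
      exact ⟨K, hK, inv_mem ha⟩
  induction m with
  | zero =>
    apply key 0
    rintro _ ⟨g, rfl⟩
    refine ⟨Subgroup.closure (Set.range g), ?_, ?_⟩
    · exact (Subgroup.fg_iff _).2 ⟨_, rfl, Set.finite_range g⟩
    · let g' : Fin n → Subgroup.closure (Set.range g) :=
        fun i => ⟨g i, Subgroup.subset_closure ⟨i, rfl⟩⟩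
      refine ⟨FreeGroup.lift g' w, Subgroup.subset_closure ⟨g', rfl⟩, ?_⟩
      rw [lift_comp_hom]; rfl
  | succ k ih =>
    intro x hx
    simp only [iterCommSub, Subgroup.commutator_def] at hx
    refine key (k + 1) _ ?_ x hx
    rintro _ ⟨a, ha, b, _, rfl⟩
    obtain ⟨K, hK, ha⟩ := ih a ha
    refine ⟨K ⊔ Subgroup.closure {b}, hK.sup ((Subgroup.fg_iff _).2 ⟨_, rfl, by simp⟩), ?_⟩
    obtain ⟨a', ha', rfl⟩ := mono_sub w k (le_sup_left (b := Subgroup.closure {b})) ha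
    have hb : b ∈ K ⊔ Subgroup.closure {b} :=
      (le_sup_right (a := K)) (Subgroup.subset_closure rfl)
    refine ⟨⁅a', ⟨b, hb⟩⁆, Subgroup.commutator_mem_commutator ha' trivial, ?_⟩
    simp [commutatorElement_def]

theorem local_finset {n : ℕ} (w : FreeGroup (Fin n)) {G : Type*} [Group G] (m : ℕ)
    (T : Finset G) (hT : ∀ x ∈ T, x ∈ iterCommSub G (verbalSubgroup w G) m) :
    ∃ K : Subgroup G, K.FG ∧
      ∀ x ∈ T, x ∈ (iterCommSub K (verbalSubgroup w K) m).map K.subtype := by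
  classical
  induction T using Finset.induction_on with
  | empty => exact ⟨⊥, Subgroup.FG.bot, by simp⟩
  | insert a T _ ih =>
    obtain ⟨K, hK, h1⟩ := ih fun x hx => hT x (Finset.mem_insert_of_mem hx)
    obtain ⟨L, hL, h2⟩ := local_mem w m a (hT a (Finset.mem_insert_self _ _))
    refine ⟨K ⊔ L, hK.sup hL, fun x hx => ?_⟩
    rcases Finset.mem_insert.1 hx with rfl | hx
    · exact mono_sub w m le_sup_right h2
    · exact mono_sub w m le_sup_left (h1 x hx)

/-- Transfer of large finite configurations to a group in an arbitrary universe. -/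
theorem transfer {n : ℕ} (w : FreeGroup (Fin n)) (m r b : ℕ) (G : Type vv) [Group G]
    (hf : (wValues w G).Finite) (hr : (wValues w G).ncard = r)
    (T : Finset G) (hT : ∀ x ∈ T, x ∈ iterCommSub G (verbalSubgroup w G) m)
    (hb : b < T.card) :
    ∃ (H : Type uu) (_ : Group H), (wValues w H).Finite ∧ (wValues w H).ncard ≤ r ∧
      ∀ E : Set H, E.Finite → E.ncard ≤ b →
        ¬ ((iterCommSub H (verbalSubgroup w H) m : Subgroup H) : Set H) ⊆ E := by
  obtain ⟨K, hK, hKT⟩ := local_finset w m T hT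
  have : Group.FG K := (Group.fg_iff_subgroup_fg K).2 hK
  have : Countable K := by
    obtain ⟨α, _, φ, hφ⟩ := Group.fg_iff_exists_freeGroup_hom_surjective_finite.1 this
    have : Countable (FreeGroup α) := Quot.mk_surjective.countable
    exact hφ.countable
  let e : Shrink.{uu} K ≃* K := Shrink.mulEquiv
  let f : Shrink.{uu} K →* G := K.subtype.comp e.toMonoidHom
  have hinj : Function.Injective f := K.subtype_injective.comp e.injective
  have hsub : f '' wValues w (Shrink.{uu} K) ⊆ wValues w G := by
    rintro _ ⟨_, ⟨g, rfl⟩, rfl⟩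
    exact ⟨fun i => f (g i), (lift_comp_hom w f g).symm⟩
  refine ⟨Shrink.{uu} K, inferInstance, ?_, ?_, ?_⟩
  · exact Set.Finite.of_finite_image (hf.subset hsub) hinj.injOn
  · rw [← hr, ← Set.ncard_image_of_injective _ hinj]
    exact Set.ncard_le_ncard hsub hf
  · intro E hE hEb hDE
    have : (T : Set G) ⊆ f '' E := by
      intro x hx
      obtain ⟨y, hy, rfl⟩ := hKT x hx
      refine ⟨e.symm y, hDE ?_, ?_⟩
      · exact map_verbal_le w e.symm.toMonoidHom m ⟨y, hy, rfl⟩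
      · simp [f]
    have h1 := Set.ncard_le_ncard this (hE.image f)
    rw [Set.ncard_coe_finset, Set.ncard_image_of_injective _ hinj] at h1
    omega

section ultra
variable {H : ℕ → Type uu} [∀ k, Group (H k)]

/-- The subgroup of the product consisting of the eventually trivial sequences. -/
def evN (U : Ultrafilter ℕ) (H : ℕ → Type uu) [∀ k, Group (H k)] : Subgroup (∀ k, H k) where
  carrier := {x | ∀ᶠ k in (U : Filter ℕ), x k = 1}
  one_mem' := by simp
  mul_mem' := by
    intro a b ha hb
    filter_upwards [ha, hb] with k h1 h2
    simp [h1, h2]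
  inv_mem' := by
    intro a ha
    filter_upwards [ha] with k h1
    simp [h1]

instance evN_normal (U : Ultrafilter ℕ) (H : ℕ → Type uu) [∀ k, Group (H k)] :
    (evN U H).Normal := by
  constructor
  intro x hx g
  change ∀ᶠ k in (U : Filter ℕ), (g * x * g⁻¹) k = 1
  filter_upwards [show ∀ᶠ k in (U : Filter ℕ), x k = 1 from hx] with k h1
  simp [h1]

theorem ev_eq_iff (U : Ultrafilter ℕ) (x y : ∀ k, H k) :
    (QuotientGroup.mk' (evN U H) x = QuotientGroup.mk' (evN U H) y) ↔
      ∀ᶠ k in (U : Filter ℕ), x k = y k := by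
  rw [QuotientGroup.mk'_apply, QuotientGroup.mk'_apply, QuotientGroup.eq]
  change (∀ᶠ k in (U : Filter ℕ), (x⁻¹ * y) k = 1) ↔ _
  apply Filter.eventually_congr
  filter_upwards with k
  simp [inv_mul_eq_one]

theorem ult_exists {ι : Type*} [Finite ι] (U : Ultrafilter ℕ) (p : ι → ℕ → Prop)
    (h : ∀ᶠ k in (U : Filter ℕ), ∃ i, p i k) : ∃ i, ∀ᶠ k in (U : Filter ℕ), p i k := by
  by_contra hc
  push Not at hc
  have h2 : ∀ i, ∀ᶠ k in (U : Filter ℕ), ¬ p i k := fun i =>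
    hc i
  have h3 := Filter.eventually_all.2 h2
  obtain ⟨k, ⟨i, hi⟩, h4⟩ := (h.and h3).exists
  exact h4 i hi

theorem ult_values {n : ℕ} (w : FreeGroup (Fin n)) (U : Ultrafilter ℕ) (r : ℕ)
    (hf : ∀ k, (wValues w (H k)).Finite) (hr : ∀ k, (wValues w (H k)).ncard ≤ r) :
    (wValues w ((∀ k, H k) ⧸ evN U H)).Finite := by
  classical
  by_contra hinf
  obtain ⟨T, hT, hc⟩ := Set.Infinite.exists_subset_card_eq hinf (r + 1)
  have hch : ∀ t : T, ∃ g : Fin n → ∀ k, H k,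
      QuotientGroup.mk' (evN U H) (FreeGroup.lift g w) = t := by
    intro t
    obtain ⟨g, hg⟩ := hT t.2
    choose g' hg' using fun i => QuotientGroup.mk'_surjective (evN U H) (g i)
    refine ⟨g', ?_⟩
    rw [lift_comp_hom, ← hg]
    simp only [hg']
  choose g hg using hch
  have hpig : ∀ k, ∃ p : T × T, p.1 ≠ p.2 ∧
      FreeGroup.lift (g p.1) w k = FreeGroup.lift (g p.2) w k := by
    intro k
    have hm : ∀ t : T, (FreeGroup.lift (g t) w) k ∈ wValues w (H k) := fun t =>
      ⟨fun i => g t i k, (lift_comp_hom w (Pi.evalMonoidHom H k) (g t)).symm⟩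
    obtain ⟨x, -, y, -, hxy, h⟩ := Finset.exists_ne_map_eq_of_card_lt_of_maps_to
      (s := (Finset.univ : Finset T)) (t := (hf k).toFinset)
      (f := fun t => FreeGroup.lift (g t) w k) (by
        rw [← Set.ncard_eq_toFinset_card _ (hf k), Finset.card_univ, Fintype.card_coe]
        have := hr k
        omega) (by intro t _; simpa using hm t)
    exact ⟨(x, y), hxy, h⟩
  obtain ⟨p, hp⟩ := ult_exists U _ (Filter.Eventually.of_forall hpig)
  obtain ⟨k, hk⟩ := hp.exists
  apply hk.1
  have := (ev_eq_iff U _ _).2 (hp.mono fun k h => h.2)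
  rw [hg, hg] at this
  exact Subtype.ext this

theorem ult_gen {n : ℕ} (w : FreeGroup (Fin n)) (U : Ultrafilter ℕ) (m : ℕ) :
    ∀ s : ∀ k, H k, (∀ᶠ k in (U : Filter ℕ), s k ∈ genSet w (H k) m) →
      QuotientGroup.mk' (evN U H) s ∈ 
        iterCommSub ((∀ k, H k) ⧸ evN U H) (verbalSubgroup w _) m := by
  classical
  induction m with
  | zero =>
    intro s hs
    have : ∀ k, ∃ g : Fin n → H k, s k ∈ genSet w (H k) 0 → FreeGroup.lift g w = s k := by
      intro k
      by_cases h : s k ∈ genSet w (H k) 0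
      · obtain ⟨g, hg⟩ := h
        exact ⟨g, fun _ => hg⟩
      · exact ⟨1, fun h' => absurd h' h⟩
    choose g hg using this
    apply Subgroup.subset_closure
    refine ⟨fun i => QuotientGroup.mk' (evN U H) fun k => g k i, ?_⟩
    beta_reduce
    rw [← lift_comp_hom, ev_eq_iff]
    filter_upwards [hs] with k hk
    rw [← hg k hk]
    exact lift_comp_hom w (Pi.evalMonoidHom H k) _
  | succ j ih =>
    intro s hs
    have : ∀ k, ∃ t g : H k, s k ∈ genSet w (H k) (j + 1) →
        t ∈ genSet w (H k) j ∧ s k = ⁅t, g⁆ := by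
      intro k
      by_cases h : s k ∈ genSet w (H k) (j + 1)
      · obtain ⟨t, ht, g, hg⟩ := h
        exact ⟨t, g, fun _ => ⟨ht, hg⟩⟩
      · exact ⟨1, 1, fun h' => absurd h' h⟩
    choose t g h using this
    have h1 := ih t (hs.mono fun k hk => (h k hk).1)
    have h2 : QuotientGroup.mk' (evN U H) s =
        ⁅QuotientGroup.mk' (evN U H) t, QuotientGroup.mk' (evN U H) g⁆ := by
      rw [← map_commutatorElement, ev_eq_iff]
      filter_upwards [hs] with k hk
      exact (h k hk).2
    rw [h2]
    exact Subgroup.commutator_mem_commutator h1 trivial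

theorem ult_bound {n : ℕ} (w : FreeGroup (Fin n)) (U : Ultrafilter ℕ) (m : ℕ)
    (hfin : ((iterCommSub ((∀ k, H k) ⧸ evN U H) (verbalSubgroup w _) m :
      Subgroup ((∀ k, H k) ⧸ evN U H)) : Set ((∀ k, H k) ⧸ evN U H)).Finite) :
    ∃ b : ℕ, ∀ᶠ k in (U : Filter ℕ), ∃ E : Set (H k), E.Finite ∧ E.ncard ≤ b ∧
      ((iterCommSub (H k) (verbalSubgroup w (H k)) m : Subgroup (H k)) : Set (H k)) ⊆ E := by
  classical
  set D := iterCommSub ((∀ k, H k) ⧸ evN U H) (verbalSubgroup w _) m with hD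
  have : Finite D := hfin
  choose d hd using fun x : D => QuotientGroup.mk'_surjective (evN U H) (x : (∀ k, H k) ⧸ evN U H)
  have hone : ∀ᶠ k in (U : Filter ℕ), d 1 k = 1 := by
    apply (ev_eq_iff U (d 1) 1).1
    rw [hd]; simp
  have hclaim : ∀ᶠ k in (U : Filter ℕ), ∀ x : D, ∀ s : H k,
      (s ∈ genSet w (H k) m) → 
        (∃ y : D, d x k * s = d y k) ∧ (∃ y : D, d x k * s⁻¹ = d y k) := by
    by_contra hc
    rw [← Ultrafilter.eventually_not] at hc
    have hc2 := ult_exists U (fun (x : D) k => ∃ s : H k, s ∈ genSet w (H k) m ∧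
        ¬ ((∃ y : D, d x k * s = d y k) ∧ (∃ y : D, d x k * s⁻¹ = d y k)))
      (hc.mono fun k hk => by push Not at hk ⊢; exact hk)
    obtain ⟨x, hx⟩ := hc2
    have : ∀ k, ∃ s : H k, (∃ s : H k, s ∈ genSet w (H k) m ∧
        ¬ ((∃ y : D, d x k * s = d y k) ∧ (∃ y : D, d x k * s⁻¹ = d y k))) →
        s ∈ genSet w (H k) m ∧
        ¬ ((∃ y : D, d x k * s = d y k) ∧ (∃ y : D, d x k * s⁻¹ = d y k)) := by
      intro k
      by_cases h : ∃ s : H k, s ∈ genSet w (H k) m ∧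
        ¬ ((∃ y : D, d x k * s = d y k) ∧ (∃ y : D, d x k * s⁻¹ = d y k))
      · obtain ⟨s, hs⟩ := h
        exact ⟨s, fun _ => hs⟩
      · exact ⟨1, fun h' => absurd h' h⟩
    choose s hs using this
    have hsD := ult_gen w U m s (hx.mono fun k hk => (hs k hk).1)
    let σ : D := ⟨_, hsD⟩
    have e1 : ∀ᶠ k in (U : Filter ℕ), (d x * s) k = d (x * σ) k := by
      rw [← ev_eq_iff, map_mul, hd, hd]; rfl
    have e2 : ∀ᶠ k in (U : Filter ℕ), (d x * s⁻¹) k = d (x * σ⁻¹) k := by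
      rw [← ev_eq_iff, map_mul, map_inv, hd, hd]; rfl
    obtain ⟨k, h1, h2, h3⟩ := (hx.and (e1.and e2)).exists
    exact (hs k h1).2 ⟨⟨_, h2⟩, ⟨_, h3⟩⟩
  refine ⟨Nat.card D, ?_⟩
  filter_upwards [hone, hclaim] with k h1 h2
  refine ⟨Set.range fun x : D => d x k, Set.finite_range _, ?_, ?_⟩
  · rw [← Set.image_univ, ← Set.ncard_univ]
    exact Set.ncard_image_le Set.finite_univ
  · intro z hz
    replace hz := iterCommSub_le_closure w (H k) m hz
    induction hz using Subgroup.closure_induction_right with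
    | one => exact ⟨1, h1⟩
    | mul_right a _ s hs ih =>
      obtain ⟨x, rfl⟩ := ih
      obtain ⟨y, hy⟩ := (h2 x s hs).1
      exact ⟨y, hy.symm⟩
    | mul_inv_cancel a _ s hs ih =>
      obtain ⟨x, rfl⟩ := ih
      obtain ⟨y, hy⟩ := (h2 x s hs).2
      exact ⟨y, hy.symm⟩

end ultra

end helpers

/-- if `w` is `(1/(m+1))`-concise, there is `f : ℕ → ℕ` such that in every
group in which `w` takes precisely `r ≥ 1` values, `[w(G), G, ..., G]` (`G` repeated `m`
times) has order at most `f r`. -/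
theorem statement_4 {n : ℕ} (m : ℕ) (w : FreeGroup (Fin n))
    (hw : IsFracConcise w (m + 1)) :
    ∃ f : ℕ → ℕ, ∀ r : ℕ, 1 ≤ r → ∀ (G : Type*) [Group G],
      (wValues w G).Finite → (wValues w G).ncard = r →
      ((iterCommSub G (verbalSubgroup w G) m : Subgroup G) : Set G).Finite ∧
        ((iterCommSub G (verbalSubgroup w G) m : Subgroup G) : Set G).ncard ≤ f r := by
  have main : ∀ r : ℕ, ∃ b : ℕ, ∀ (G : Type _) [Group G],
      (wValues w G).Finite → (wValues w G).ncard = r →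
      ((iterCommSub G (verbalSubgroup w G) m : Subgroup G) : Set G).Finite ∧
        ((iterCommSub G (verbalSubgroup w G) m : Subgroup G) : Set G).ncard ≤ b := by
    intro r
    by_contra hc
    push Not at hc
    have hH : ∀ b : ℕ, ∃ (H : Type _) (_ : Group H), (wValues w H).Finite ∧
        (wValues w H).ncard ≤ r ∧ ∀ E : Set H, E.Finite → E.ncard ≤ b →
        ¬ ((iterCommSub H (verbalSubgroup w H) m : Subgroup H) : Set H) ⊆ E := by
      intro b
      obtain ⟨G, _, hf, hr, hbig⟩ := hc b
      have : ∃ T : Finset G, (T : Set G) ⊆ iterCommSub G (verbalSubgroup w G) m ∧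
          T.card = b + 1 := by
        by_cases hfin : ((iterCommSub G (verbalSubgroup w G) m : Subgroup G) : Set G).Finite
        · have h1 := hbig hfin
          rw [Set.ncard_eq_toFinset_card _ hfin] at h1
          obtain ⟨T, hT, hTc⟩ := Finset.exists_subset_card_eq (Nat.succ_le_of_lt h1)
          exact ⟨T, fun x hx => by simpa using hT hx, hTc⟩
        · exact Set.Infinite.exists_subset_card_eq hfin _
      obtain ⟨T, hT, hTc⟩ := this
      exact transfer w m r b G hf hr T (fun x hx => hT hx) (by omega)
    choose H hG hf hr hbig using hH
    have hP := hw ((∀ k, H k) ⧸ evN (Filter.hyperfilter ℕ) H) (ult_values w _ r hf hr)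
    obtain ⟨b, hb⟩ := ult_bound w (Filter.hyperfilter ℕ) m hP
    have hge : ∀ᶠ k in (Filter.hyperfilter ℕ : Filter ℕ), b ≤ k :=
      Nat.hyperfilter_le_atTop (Filter.eventually_ge_atTop b)
    obtain ⟨k, ⟨E, hE, hEb, hsub⟩, hk⟩ := (hb.and hge).exists
    exact hbig k E hE (hEb.trans hk) hsub
  choose f hf using main
  exact ⟨f, fun r _ G _ h1 h2 => hf r G h1 h2⟩
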